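/- Let q be a free idempotent ultrafilter on ℕ, let γ > 0 be irrational, and let f : ℝ → ℝ be differentiable at every point of the open interval (−γ/2, γ/2). Then for every n ∈ ℕ with n ≥ 1 and every real ε > 0, the set {m : ℕ | |(f(rm_γ(n + m)) − f(rm_γ(n)))/rm_γ(m) − deriv f (rm_γ(n))| < ε} belongs to q. (I.e., the derivative-by-[rm_γ] operator satisfies D_γ[f ∘ rm_γ] = [f′ ∘ rm_γ]: the standard part of Δ(f ∘ rm_γ)(n)/[rm_γ] equals f′(rm_γ(n)).) -/

import Mathlib

noncomputable def rm (γ : ℝ) (n : ℕ) : ℝ := (n : ℝ) - γ * (round ((n : ℝ) / γ) : ℝ)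

/-!
The circle `ℝ / γℤ` is compact, so the homomorphism `n ↦ n mod γ` into it converges along `q` to
some `L`. Idempotence of `q` gives `L + L = L`, hence `L = 0`; that is, `rm γ m → 0` along `q`.
Since `rm γ n` lies strictly inside `(-γ/2, γ/2)`, adding the small `rm γ m` to it causes no
wrap-around, so `rm γ (n + m) = rm γ n + rm γ m` for `q`-almost all `m`. The quotient is therefore
an ordinary difference quotient with increment `rm γ m`, nonzero and tending to `0`.
-/

open Filter Topology

attribute [local instance] Ultrafilter.add

theorem ultrafilter_add_self_eq_iff {M : Type*} [AddCommMagma M] {q : Ultrafilter M} :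
    q + q = q ↔ ∀ S : Set M, S ∈ q ↔ {n | {m | m + n ∈ S} ∈ q} ∈ q := by
  have hmem (S : Set M) : S ∈ q + q ↔ {n | {m | m + n ∈ S} ∈ q} ∈ q := by
    have hcomm (n : M) : {m | m + n ∈ S} = {m | n + m ∈ S} := by simp only [add_comm]
    simp only [hcomm]
    exact Ultrafilter.eventually_add q q (· ∈ S)
  simp only [← hmem, Ultrafilter.ext_iff, iff_comm]

section AddHom

variable {M G F : Type*} [Add M] [TopologicalSpace G] [FunLike F M G]

theorem tendsto_ultrafilter_add [Add G] [ContinuousAdd G] [AddHomClass F M G] (g : F)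
    {U V : Ultrafilter M} {a b : G} (hU : Tendsto g U (𝓝 a)) (hV : Tendsto g V (𝓝 b)) :
    Tendsto g ↑(U + V) (𝓝 (a + b)) := by
  intro W hW
  have hprod : Tendsto (fun p : M × M ↦ g p.1 + g p.2) (↑U ×ˢ ↑V) (𝓝 (a + b)) :=
    (hU.comp tendsto_fst).add (hV.comp tendsto_snd)
  refine (Ultrafilter.eventually_add U V (g · ∈ W)).2 ?_
  simpa only [map_add] using (hprod.eventually_mem hW).curry

theorem tendsto_zero_of_ultrafilter_add_self [AddGroup G] [ContinuousAdd G] [CompactSpace G]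
    [T2Space G] [AddHomClass F M G] (g : F) {q : Ultrafilter M} (hq : q + q = q) :
    Tendsto g q (𝓝 0) := by
  have hlim : Tendsto g q (𝓝 (q.map g).lim) := (q.map g).le_nhds_lim
  have hlim_add := tendsto_ultrafilter_add g hlim hlim
  rw [hq] at hlim_add
  rwa [add_eq_left.1 (tendsto_nhds_unique hlim_add hlim)] at hlim

end AddHom

theorem abs_sub_round_lt_half_of_irrational {x : ℝ} (hx : Irrational x) :
    |x - round x| < 1 / 2 := by
  have hirr := hx.sub_intCast (round x)
  refine (abs_sub_round x).lt_of_ne fun h ↦ ?_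
  rcases (abs_eq (by norm_num)).1 h with h | h
  · exact hirr.ne_rat (1 / 2) (by push_cast; exact h)
  · exact hirr.ne_rat (-(1 / 2)) (by push_cast; exact h)

section rm

variable {γ : ℝ}

theorem rm_eq_mul_sub_round (hγ : γ ≠ 0) (n : ℕ) :
    rm γ n = γ * (n / γ - round ((n : ℝ) / γ)) := by
  rw [rm, mul_sub, mul_div_cancel₀ _ hγ]

theorem rm_ne_zero (hγ : Irrational γ) {n : ℕ} (hn : n ≠ 0) : rm γ n ≠ 0 := by
  rw [rm_eq_mul_sub_round hγ.ne_zero]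
  exact mul_ne_zero hγ.ne_zero ((hγ.natCast_div hn).sub_intCast _).ne_zero

theorem abs_rm_lt (hγ_pos : 0 < γ) (hγ : Irrational γ) (n : ℕ) : |rm γ n| < γ / 2 := by
  rcases eq_or_ne n 0 with rfl | hn
  · simpa [rm] using hγ_pos
  · calc |rm γ n| = γ * |n / γ - round ((n : ℝ) / γ)| := by
          rw [rm_eq_mul_sub_round hγ_pos.ne', abs_mul, abs_of_pos hγ_pos]
      _ < γ * (1 / 2) := by
          gcongr
          exact abs_sub_round_lt_half_of_irrational (hγ.natCast_div hn)
      _ = γ / 2 := by ring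

theorem rm_eq_of_natCast_eq_add_mul (hγ_pos : 0 < γ) {n : ℕ} {x : ℝ} {z : ℤ}
    (hn : (n : ℝ) = x + γ * z) (hx : |x| < γ / 2) : rm γ n = x := by
  have hround : round (x / γ) = 0 := by
    rw [abs_lt] at hx
    rw [round_eq_zero_iff, Set.mem_Ico, le_div_iff₀ hγ_pos, div_lt_iff₀ hγ_pos]
    constructor <;> linarith
  have hdiv : (n : ℝ) / γ = x / γ + z := by
    rw [hn, add_div, mul_div_cancel_left₀ _ hγ_pos.ne']
  rw [rm, hdiv, round_add_intCast, hround, zero_add, hn, add_sub_cancel_right]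

theorem rm_add_of_abs_add_lt (hγ_pos : 0 < γ) {n m : ℕ} (h : |rm γ n + rm γ m| < γ / 2) :
    rm γ (n + m) = rm γ n + rm γ m := by
  refine rm_eq_of_natCast_eq_add_mul hγ_pos
    (z := round ((n : ℝ) / γ) + round ((m : ℝ) / γ)) ?_ h
  simp only [rm]
  push_cast
  ring

theorem norm_natCast_addCircle_eq_abs_rm (γ : ℝ) (n : ℕ) :
    ‖((n : ℝ) : AddCircle γ)‖ = |rm γ n| := by
  rw [AddCircle.norm_eq, rm, div_eq_inv_mul, mul_comm γ]

variable {q : Ultrafilter ℕ}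

theorem tendsto_rm_nhds_zero (hq : q + q = q) (hγ_pos : 0 < γ) : Tendsto (rm γ) q (𝓝 0) := by
  have : Fact (0 < γ) := ⟨hγ_pos⟩
  let toCircle : ℕ →+ AddCircle γ := (QuotientAddGroup.mk' _).comp (Nat.castAddMonoidHom ℝ)
  have hnorm := (tendsto_zero_of_ultrafilter_add_self toCircle hq).norm
  rw [norm_zero] at hnorm
  exact (tendsto_zero_iff_abs_tendsto_zero _).2 <|
    hnorm.congr fun m ↦ norm_natCast_addCircle_eq_abs_rm γ m

theorem tendsto_rm_nhdsNE_zero (hq : q + q = q) (hq_zero : {0} ∉ q) (hγ_pos : 0 < γ)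
    (hγ : Irrational γ) : Tendsto (rm γ) q (𝓝[≠] 0) := by
  have hne : ∀ᶠ m in (q : Filter ℕ), m ≠ 0 := Ultrafilter.compl_mem_iff_notMem.2 hq_zero
  exact tendsto_nhdsWithin_iff.2
    ⟨tendsto_rm_nhds_zero hq hγ_pos, hne.mono fun m hm ↦ rm_ne_zero hγ hm⟩

theorem eventually_rm_add (hq : q + q = q) (hγ_pos : 0 < γ) (hγ : Irrational γ) (n : ℕ) :
    ∀ᶠ m in (q : Filter ℕ), rm γ (n + m) = rm γ n + rm γ m := by
  have hsum : Tendsto (fun m ↦ |rm γ n + rm γ m|) q (𝓝 |rm γ n|) := by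
    simpa only [add_zero] using ((tendsto_rm_nhds_zero hq hγ_pos).const_add (rm γ n)).abs
  filter_upwards [hsum.eventually_lt_const (abs_rm_lt hγ_pos hγ n)] with m hm
  exact rm_add_of_abs_add_lt hγ_pos hm

end rm

theorem stmt_19_general {E : Type*} [NormedAddCommGroup E] [NormedSpace ℝ E] {q : Ultrafilter ℕ}
    (hq : q + q = q) (hq_zero : {0} ∉ q) {γ : ℝ} (hγ_pos : 0 < γ) (hγ : Irrational γ)
    {f : ℝ → E} {f' : E} {n : ℕ} (hf : HasDerivAt f f' (rm γ n)) :
    Tendsto (fun m ↦ (rm γ m)⁻¹ • (f (rm γ (n + m)) - f (rm γ n))) q (𝓝 f') := by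
  have hslope := hf.tendsto_slope_zero.comp (tendsto_rm_nhdsNE_zero hq hq_zero hγ_pos hγ)
  refine hslope.congr' ?_
  filter_upwards [eventually_rm_add hq hγ_pos hγ n] with m hm
  rw [Function.comp_apply, hm]

theorem stmt_19 (q : Ultrafilter ℕ)
    (hfree : ∀ S : Set ℕ, S.Finite → S ∉ q)
    (hidem : ∀ S : Set ℕ, S ∈ q ↔ {n : ℕ | {m : ℕ | m + n ∈ S} ∈ q} ∈ q)
    (γ : ℝ) (hγpos : 0 < γ) (hγirr : Irrational γ)
    (f : ℝ → ℝ)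
    (hdiff : ∀ x ∈ Set.Ioo (-(γ / 2)) (γ / 2), DifferentiableAt ℝ f x) :
    ∀ n : ℕ, 1 ≤ n → ∀ ε : ℝ, 0 < ε →
      {m : ℕ | |(f (rm γ (n + m)) - f (rm γ n)) / rm γ m - deriv f (rm γ n)| < ε}
        ∈ q := by
  intro n _ ε hε
  have hderiv := (hdiff _ (abs_lt.1 (abs_rm_lt hγpos hγirr n))).hasDerivAt
  have hlim := stmt_19_general (ultrafilter_add_self_eq_iff.2 hidem)
    (hfree {0} (Set.finite_singleton 0)) hγpos hγirr hderiv
  filter_upwards [Metric.tendsto_nhds.1 hlim ε hε] with m hm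
  rwa [smul_eq_mul, ← div_eq_inv_mul, Real.dist_eq] at hm
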